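/- Let V(x) = (1/256)·sech²(x/(8√2)) + 24·tanh(x/(8√2))·cosh²(x/(8√2))·tanh(x/√2)·sech²(x/√2) and Z₁(x) = 2^(-3/4)·√3·tanh(x/√2)·sech(x/√2)·cosh(x/(8√2)). There exists κ > 0 such that for every odd, bounded, differentiable function w : ℝ → ℝ with w' square integrable on ℝ and satisfying ∫_ℝ w(x)·Z₁(x) dx = 0, one has ∫_ℝ ( w'(x)² - V(x)·w(x)² ) dx ≥ κ·∫_ℝ w'(x)² dx. -/

import Mathlib

open MeasureTheory
noncomputable def sech (x : ℝ) : ℝ := 1 / Real.cosh x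

noncomputable def Vpot (x : ℝ) : ℝ :=
  (1 / 256) * sech (x / (8 * Real.sqrt 2)) ^ 2
    + 24 * Real.tanh (x / (8 * Real.sqrt 2)) * Real.cosh (x / (8 * Real.sqrt 2)) ^ 2
      * Real.tanh (x / Real.sqrt 2) * sech (x / Real.sqrt 2) ^ 2

noncomputable def Z1 (x : ℝ) : ℝ :=
  (2 : ℝ) ^ (-(3 : ℝ) / 4) * Real.sqrt 3 * Real.tanh (x / Real.sqrt 2) * sech (x / Real.sqrt 2)
    * Real.cosh (x / (8 * Real.sqrt 2))

/-! ### Certified positivity of integer polynomials on intervals -/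

/-- Horner evaluation of an integer polynomial (low order coefficients first). -/
noncomputable def evalL : List ℤ → ℝ → ℝ
  | [], _ => 0
  | a :: l, x => (a : ℝ) + x * evalL l x

/-- Sum of two coefficient lists. -/
def addL : List ℤ → List ℤ → List ℤ
  | [], m => m
  | a :: l, [] => a :: l
  | a :: l, b :: m => (a + b) :: addL l m

/-- Multiplication by a constant. -/
def smulL (c : ℤ) : List ℤ → List ℤ
  | [] => []
  | a :: l => (c * a) :: smulL c l

/-- Multiplication by the linear polynomial `α + β y`. -/
def linL (α β : ℤ) (l : List ℤ) : List ℤ := addL (smulL α l) (0 :: smulL β l)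

/-- Moebius transform: the polynomial `(γ (1+y))^n P((α + β y)/(γ (1+y)))` together with
`(γ (1+y))^(n+1)`. -/
def moebL (α β γ : ℤ) : List ℤ → List ℤ × List ℤ
  | [] => ([], [1])
  | c :: l =>
    (addL (smulL c (moebL α β γ l).2) (linL α β (moebL α β γ l).1),
      linL γ γ (moebL α β γ l).2)

/-- All coefficients are nonnegative. -/
def nonnegL : List ℤ → Bool
  | [] => true
  | a :: l => decide (0 ≤ a) && nonnegL l

lemma evalL_addL (l m : List ℤ) (x : ℝ) : evalL (addL l m) x = evalL l x + evalL m x := by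
  induction l generalizing m with
  | nil => simp [addL, evalL]
  | cons a l ih =>
    cases m with
    | nil => simp [addL, evalL]
    | cons b m => simp [addL, evalL, ih]; ring

lemma evalL_smulL (c : ℤ) (l : List ℤ) (x : ℝ) : evalL (smulL c l) x = c * evalL l x := by
  induction l with
  | nil => simp [smulL, evalL]
  | cons a l ih => simp [smulL, evalL, ih]; ring

lemma evalL_linL (α β : ℤ) (l : List ℤ) (x : ℝ) :
    evalL (linL α β l) x = (α + β * x) * evalL l x := by
  simp [linL, evalL_addL, evalL_smulL, evalL]; ring

lemma evalL_moebL (α β γ : ℤ) (l : List ℤ) (r y : ℝ)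
    (h : r * (γ * (1 + y)) = α + β * y) :
    evalL (moebL α β γ l).2 y = (γ * (1 + y)) ^ l.length ∧
    evalL (moebL α β γ l).1 y * (γ * (1 + y)) = (γ * (1 + y)) ^ l.length * evalL l r := by
  induction l with
  | nil => simp [moebL, evalL]
  | cons c l ih =>
    obtain ⟨h1, h2⟩ := ih
    refine ⟨?_, ?_⟩
    · simp only [moebL, evalL_linL, h1, List.length_cons]; ring
    · simp only [moebL, evalL_linL, evalL_addL, evalL_smulL, h1, List.length_cons, evalL]
      rw [← h]
      linear_combination (r * (γ * (1 + y))) * h2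

lemma evalL_nonneg (l : List ℤ) (hl : nonnegL l = true) (x : ℝ) (hx : 0 ≤ x) :
    0 ≤ evalL l x := by
  induction l with
  | nil => simp [evalL]
  | cons a l ih =>
    simp only [nonnegL, Bool.and_eq_true, decide_eq_true_eq] at hl
    have h1 : (0 : ℝ) ≤ a := by exact_mod_cast hl.1
    have h2 := ih hl.2
    simp only [evalL]
    positivity

/-- Positivity on `[α/γ, β/γ)` from positivity of the transformed coefficients. -/
lemma evalL_nonneg_on (α β γ : ℤ) (l : List ℤ) (hγ : 0 < γ)
    (hl : nonnegL (moebL α β γ l).1 = true) (r : ℝ) (h1 : (α : ℝ) ≤ γ * r) (h2 : γ * r < β) :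
    0 ≤ evalL l r := by
  have hγ' : (0 : ℝ) < γ := by exact_mod_cast hγ
  have hb : 0 < (β : ℝ) - γ * r := by linarith
  set y : ℝ := (γ * r - α) / (β - γ * r) with hy
  have hy0 : 0 ≤ y := div_nonneg (by linarith) hb.le
  have h : r * (γ * (1 + y)) = α + β * y := by
    have hy' : y * (β - γ * r) = γ * r - α := div_mul_cancel₀ _ hb.ne'
    linear_combination -hy'
  have h3 := (evalL_moebL α β γ l r y h).2
  have h4 := evalL_nonneg _ hl y hy0
  have h5 : 0 ≤ (γ * (1 + y)) ^ l.length * evalL l r := by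
    rw [← h3]; positivity
  exact nonneg_of_mul_nonneg_right h5 (by positivity)

/-- polynomial certificate A -/
def polA : List ℤ :=
  [922, 22966, 159766, -1113834, -3997632, 10842368, 31322998, 4192566, -34094421, -23395873, -124057246, -373841086, -42210112, 940455680, 860184674, -473154142, -894414235, -141378727, 371385762, 462950722, 2480320, -900105472, -613142430, 679040418, 775001905, -83559443, -323094154, -97930474, -7709632, 5850368, 38303606, 28548406, -23393315, -36962115, -12300000]

lemma polA_nonneg (r : ℝ) (h1 : 3/20 ≤ r) (h2 : r < 1) : 0 ≤ evalL polA r := by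
  rcases lt_or_ge r (23/40) with h | h1
  · exact evalL_nonneg_on (6) 23 40 polA (by norm_num) (by decide +kernel) r
      (by push_cast; linarith) (by push_cast; linarith)
  exact evalL_nonneg_on (23) 40 40 polA (by norm_num) (by decide +kernel) r
    (by push_cast; linarith) (by push_cast; linarith)

/-- polynomial certificate B -/
def polB : List ℤ :=
  [25272, 10741, 10741, 5741, 314093, 309093, -919569, -919569, 594179, 565117, -18518, -13518, 693186, 698186, -1759138, -1759138, 1192542, 1178011, 10741, 10741, 349093, 349093, -879569, -879569, 583635, 583635]

lemma polB_nonneg (r : ℝ) (h1 : 13/20 ≤ r) (h2 : r < 1) : 0 ≤ evalL polB r := by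
  rcases lt_or_ge r (33/40) with h | h1
  · exact evalL_nonneg_on (26) 33 40 polB (by norm_num) (by decide +kernel) r
      (by push_cast; linarith) (by push_cast; linarith)
  exact evalL_nonneg_on (33) 40 40 polB (by norm_num) (by decide +kernel) r
    (by push_cast; linarith) (by push_cast; linarith)

/-- polynomial certificate C -/
def polC : List ℤ :=
  [1450, 0, 50572, 791328, -617750, -7848000, 5728554, 13083200, 1690011, -6150000, -16108455, 0, 10409490]

lemma polC_nonneg (r : ℝ) (h1 : 0 ≤ r) (h2 : r < 13/20) : 0 ≤ evalL polC r := by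
  rcases lt_or_ge r (13/40) with h | h1
  · exact evalL_nonneg_on (0) 13 40 polC (by norm_num) (by decide +kernel) r
      (by push_cast; linarith) (by push_cast; linarith)
  rcases lt_or_ge r (39/80) with h | h1
  · exact evalL_nonneg_on (26) 39 80 polC (by norm_num) (by decide +kernel) r
      (by push_cast; linarith) (by push_cast; linarith)
  exact evalL_nonneg_on (39) 52 80 polC (by norm_num) (by decide +kernel) r
    (by push_cast; linarith) (by push_cast; linarith)

/-- polynomial certificate D -/
def polD : List ℤ :=
  [922, 22044, 8800, -825600, -1731798, 15288000, 20352630, -27130432, -50390361, -6742816, -99136413, -235297056, 223395840, 694388736, 33664512, -627059712, -218121216, 190817280, 95408640]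

lemma polD_nonneg (r : ℝ) (h1 : 0 ≤ r) (h2 : r < 3/20) : 0 ≤ evalL polD r := by
  exact evalL_nonneg_on (0) 3 20 polD (by norm_num) (by decide +kernel) r
    (by push_cast; linarith) (by push_cast; linarith)

/-- polynomial certificate E -/
def polE : List ℤ :=
  [77, 34, 34, 34, 832, 832, -1406, -1406, 615, 615]

lemma polE_nonneg (r : ℝ) (h1 : 0 ≤ r) (h2 : r < 1) : 0 ≤ evalL polE r := by
  exact evalL_nonneg_on (0) 1 1 polE (by norm_num) (by decide +kernel) r
    (by push_cast; linarith) (by push_cast; linarith)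

/-! ### The certificate functions in the variable `r` -/

noncomputable def psiR (r : ℝ) : ℝ :=
  78 - 44 * r + 798 * r ^ 4 - 2238 * r ^ 6 + 2021 * r ^ 8 - 615 * r ^ 10

noncomputable def psi2R (r : ℝ) : ℝ :=
  (-44 * r + 12768 * r ^ 4 - 80568 * r ^ 6 + 129344 * r ^ 8 - 61500 * r ^ 10) / 32

noncomputable def VR (r : ℝ) : ℝ :=
  r / (64 * (1 + r) ^ 2) + 24 * r ^ 7 * (1 - r ^ 2) * (1 - r ^ 8) / (1 + r ^ 8) ^ 3

noncomputable def ZR (r k : ℝ) : ℝ := 2 * r ^ 4 * (1 - r ^ 8) / (1 + r ^ 8) ^ 2 * k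

noncomputable def phiR (r : ℝ) : ℝ := 1 - 3 / 4 * r - 93 / 50 * r ^ 3

noncomputable def phi2R (r : ℝ) : ℝ := (3 / 4 * r + 9 * (93 / 50) * r ^ 3) / 32

lemma psiR_pos (r : ℝ) (h0 : 0 ≤ r) (h1 : r < 1) : 0 < psiR r := by
  have h := polE_nonneg r h0 h1
  have e : psiR r = (1 - r) * (1 + evalL polE r) := by
    simp only [psiR, polE, evalL]; push_cast; ring
  rw [e]
  exact mul_pos (by linarith) (by linarith)

lemma certA (r : ℝ) (h0 : 3 / 20 ≤ r) (h1 : r < 1) :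
    101 / 100 * VR r * psiR r ≤
      100 * ((r ^ 3 + 8 * r ^ 4 + r ^ 5) * (1 - r ^ 8) / (5 * (1 + r ^ 8) ^ 2)) - psi2R r := by
  have h := polA_nonneg r h0 h1
  have hr : 0 < r := by linarith
  rw [← sub_nonneg]
  have e : 100 * ((r ^ 3 + 8 * r ^ 4 + r ^ 5) * (1 - r ^ 8) / (5 * (1 + r ^ 8) ^ 2)) - psi2R r
      - 101 / 100 * VR r * psiR r =
      r * (1 - r) * evalL polA r / 6400 / ((1 + r ^ 8) ^ 3 * (1 + r) ^ 2) := by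
    have e1 : (1 + r ^ 8) ≠ 0 := by positivity
    have e2 : (1 + r) ≠ 0 := by positivity
    rw [eq_div_iff (by positivity)]
    have e3 : 100 * ((r ^ 3 + 8 * r ^ 4 + r ^ 5) * (1 - r ^ 8) / (5 * (1 + r ^ 8) ^ 2))
        * ((1 + r ^ 8) ^ 3 * (1 + r) ^ 2) =
        20 * (r ^ 3 + 8 * r ^ 4 + r ^ 5) * (1 - r ^ 8) * (1 + r ^ 8) * (1 + r) ^ 2 := by
      field_simp; ring
    have e4 : VR r * ((1 + r ^ 8) ^ 3 * (1 + r) ^ 2) =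
        r / 64 * (1 + r ^ 8) ^ 3 + 24 * r ^ 7 * (1 - r ^ 2) * (1 - r ^ 8) * (1 + r) ^ 2 := by
      simp only [VR]; field_simp
    calc _ = 100 * ((r ^ 3 + 8 * r ^ 4 + r ^ 5) * (1 - r ^ 8) / (5 * (1 + r ^ 8) ^ 2))
        * ((1 + r ^ 8) ^ 3 * (1 + r) ^ 2) - psi2R r * ((1 + r ^ 8) ^ 3 * (1 + r) ^ 2)
        - 101 / 100 * psiR r * (VR r * ((1 + r ^ 8) ^ 3 * (1 + r) ^ 2)) := by ring
      _ = _ := by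
        rw [e3, e4]; simp only [psiR, psi2R, polA, evalL]; push_cast; ring
  rw [e]
  have : 0 ≤ 1 - r := by linarith
  positivity

lemma certD (r : ℝ) (h0 : 0 < r) (h1 : r < 3 / 20) :
    101 / 100 * VR r * psiR r ≤ 270 * r ^ 4 - psi2R r := by
  have h := polD_nonneg r h0.le h1
  have hps := psiR_pos r h0.le (by linarith)
  have hV : VR r ≤ r / (64 * (1 + r) ^ 2) + 24 * r ^ 7 := by
    unfold VR
    have : 24 * r ^ 7 * (1 - r ^ 2) * (1 - r ^ 8) / (1 + r ^ 8) ^ 3 ≤ 24 * r ^ 7 := by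
      rw [div_le_iff₀ (by positivity)]
      have a1 : 0 ≤ 1 - r ^ 2 := by nlinarith
      have a2 : (1 - r ^ 2) * (1 - r ^ 8) ≤ 1 * 1 := by
        have : 0 ≤ r ^ 8 := by positivity
        have b : 0 ≤ 1 - r ^ 8 := by
          have : r ^ 8 ≤ 1 := pow_le_one₀ h0.le (by linarith)
          linarith
        have : 0 ≤ r ^ 2 := by positivity
        gcongr <;> linarith
      have a3 : 1 ≤ (1 + r ^ 8) ^ 3 := one_le_pow₀ (by have : 0 ≤ r ^ 8 := by positivity
                                                       linarith)
      have a4 : 0 ≤ 24 * r ^ 7 := by positivity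
      nlinarith
    linarith
  have hb : 101 / 100 * VR r * psiR r ≤
      101 / 100 * (r / (64 * (1 + r) ^ 2) + 24 * r ^ 7) * psiR r := by gcongr
  refine hb.trans ?_
  rw [← sub_nonneg]
  have e : 270 * r ^ 4 - psi2R r - 101 / 100 * (r / (64 * (1 + r) ^ 2) + 24 * r ^ 7) * psiR r =
      r * evalL polD r / 6400 / (1 + r) ^ 2 := by
    have e2 : (1 + r) ≠ 0 := by positivity
    rw [eq_div_iff (by positivity)]
    have e4 : (r / (64 * (1 + r) ^ 2) + 24 * r ^ 7) * (1 + r) ^ 2 =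
        r / 64 + 24 * r ^ 7 * (1 + r) ^ 2 := by field_simp
    calc _ = (270 * r ^ 4 - psi2R r) * (1 + r) ^ 2
        - 101 / 100 * psiR r * ((r / (64 * (1 + r) ^ 2) + 24 * r ^ 7) * (1 + r) ^ 2) := by ring
      _ = _ := by
        rw [e4]; simp only [psiR, psi2R, polD, evalL]; push_cast; ring
  rw [e]
  positivity

lemma certB (r : ℝ) (h0 : 13 / 20 ≤ r) (h1 : r < 1) :
    100 * ((r ^ 3 + 6 * r ^ 4 + r ^ 5) * (1 - r ^ 8) / (4 * (1 + r ^ 8) ^ 2)) - psi2R r ≤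
      81 / 50 * psiR r := by
  have h := polB_nonneg r h0 h1
  have hr : 0 < r := by linarith
  rw [← sub_nonneg]
  have e : 81 / 50 * psiR r -
      (100 * ((r ^ 3 + 6 * r ^ 4 + r ^ 5) * (1 - r ^ 8) / (4 * (1 + r ^ 8) ^ 2)) - psi2R r) =
      (1 - r) * evalL polB r / 200 / (1 + r ^ 8) ^ 2 := by
    have e1 : (1 + r ^ 8) ≠ 0 := by positivity
    rw [eq_div_iff (by positivity)]
    have e3 : 100 * ((r ^ 3 + 6 * r ^ 4 + r ^ 5) * (1 - r ^ 8) / (4 * (1 + r ^ 8) ^ 2))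
        * (1 + r ^ 8) ^ 2 =
        25 * (r ^ 3 + 6 * r ^ 4 + r ^ 5) * (1 - r ^ 8) := by
      field_simp; ring
    rw [sub_mul, sub_mul, e3]
    simp only [psiR, psi2R, polB, evalL]; push_cast; ring
  rw [e]
  have : 0 ≤ 1 - r := by linarith
  positivity

lemma certC (r : ℝ) (h0 : 0 < r) (h1 : r < 13 / 20) :
    (100 * ((r ^ 3 + 6 * r ^ 4 + r ^ 5) / 4) - psi2R r) * phiR r ≤ phi2R r * psiR r := by
  have h := polC_nonneg r h0.le h1
  rw [← sub_nonneg]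
  have e : phi2R r * psiR r -
      (100 * ((r ^ 3 + 6 * r ^ 4 + r ^ 5) / 4) - psi2R r) * phiR r =
      r * evalL polC r / 3200 := by
    simp only [psiR, psi2R, phiR, phi2R, polC, evalL]; push_cast; ring
  rw [e]
  positivity

lemma phiR_pos (r : ℝ) (h0 : 0 ≤ r) (h1 : r ≤ 13 / 20) : 0 < phiR r := by
  unfold phiR
  have : r ^ 3 ≤ (13 / 20) ^ 3 := by gcongr
  nlinarith

/-- The hypothesis on `k = cosh (y/2)`. -/
lemma k_bounds (r k : ℝ) (h0 : 0 < r) (hk : 4 * r * k ^ 2 = (1 + r) ^ 2) (hk0 : 0 < k) :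
    1 ≤ k := by
  by_contra hc
  push Not at hc
  have : k ^ 2 < 1 := by nlinarith
  nlinarith [sq_nonneg (1 - r)]

lemma ZR_lower (r k : ℝ) (h0 : 0 < r) (h1 : r < 1) (hk : 4 * r * k ^ 2 = (1 + r) ^ 2)
    (hk0 : 0 < k) : 101 / 100 * VR r * psiR r ≤ 100 * ZR r k - psi2R r := by
  have hk1 := k_bounds r k h0 hk hk0
  have b : 0 ≤ 1 - r ^ 8 := by
    have : r ^ 8 ≤ 1 := pow_le_one₀ h0.le (by linarith)
    linarith
  rcases lt_or_ge r (3 / 20) with h | h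
  · refine (certD r h0 h).trans ?_
    have hk2 : 7 / 5 ≤ k := by
      by_contra hc
      push Not at hc
      have : k ^ 2 < 49 / 25 := by nlinarith
      nlinarith
    have h8 : r ^ 8 ≤ (3 / 20) ^ 8 := by gcongr
    have : 27 / 10 * r ^ 4 ≤ ZR r k := by
      unfold ZR
      have h9 : 27 / 28 ≤ (1 - r ^ 8) / (1 + r ^ 8) ^ 2 := by
        rw [le_div_iff₀ (by positivity)]
        have : 0 ≤ r ^ 8 := by positivity
        nlinarith
      calc 27 / 10 * r ^ 4 = 2 * r ^ 4 * (27 / 28) * (7 / 5) := by ring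
        _ ≤ 2 * r ^ 4 * ((1 - r ^ 8) / (1 + r ^ 8) ^ 2) * k := by gcongr
        _ = _ := by ring
    linarith
  · refine (certA r h h1).trans ?_
    have hk2 : k ≤ 3 / 2 := by
      by_contra hc
      push Not at hc
      have : 9 / 4 < k ^ 2 := by nlinarith
      nlinarith
    have hk3 : (3 + 2 * k ^ 2) / 5 ≤ k := by nlinarith
    have hk4 : r ^ 3 + 8 * r ^ 4 + r ^ 5 ≤ 10 * r ^ 4 * k := by
      have : r ^ 3 + 8 * r ^ 4 + r ^ 5 = 10 * r ^ 4 * ((3 + 2 * k ^ 2) / 5) := by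
        linear_combination -r ^ 3 * hk
      rw [this]; gcongr
    have : (r ^ 3 + 8 * r ^ 4 + r ^ 5) * (1 - r ^ 8) / (5 * (1 + r ^ 8) ^ 2) ≤ ZR r k := by
      unfold ZR
      calc _ ≤ (10 * r ^ 4 * k) * (1 - r ^ 8) / (5 * (1 + r ^ 8) ^ 2) := by gcongr
        _ = _ := by field_simp; ring
    linarith

lemma ZR_upper (r k : ℝ) (h0 : 0 < r) (h1 : r < 1) (hk : 4 * r * k ^ 2 = (1 + r) ^ 2) :
    ZR r k ≤ (r ^ 3 + 6 * r ^ 4 + r ^ 5) * (1 - r ^ 8) / (4 * (1 + r ^ 8) ^ 2) := by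
  have b : 0 ≤ 1 - r ^ 8 := by
    have : r ^ 8 ≤ 1 := pow_le_one₀ h0.le (by linarith)
    linarith
  have hk4 : 8 * r ^ 4 * k ≤ r ^ 3 + 6 * r ^ 4 + r ^ 5 := by
    have : r ^ 3 + 6 * r ^ 4 + r ^ 5 = 8 * r ^ 4 * ((1 + k ^ 2) / 2) := by
      linear_combination -r ^ 3 * hk
    rw [this]; gcongr; nlinarith [sq_nonneg (k - 1)]
  unfold ZR
  calc _ = (8 * r ^ 4 * k) * (1 - r ^ 8) / (4 * (1 + r ^ 8) ^ 2) := by field_simp; ring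
    _ ≤ _ := by gcongr

lemma ZR_upperB (r k : ℝ) (h0 : 13 / 20 ≤ r) (h1 : r < 1)
    (hk : 4 * r * k ^ 2 = (1 + r) ^ 2) : 100 * ZR r k - psi2R r ≤ 81 / 50 * psiR r := by
  have := ZR_upper r k (by linarith) h1 hk
  have := certB r h0 h1
  linarith

lemma ZR_upper2 (r k : ℝ) (h0 : 0 < r) (h1 : r < 1)
    (hk : 4 * r * k ^ 2 = (1 + r) ^ 2) : ZR r k ≤ (r ^ 3 + 6 * r ^ 4 + r ^ 5) / 4 := by
  refine (ZR_upper r k h0 h1 hk).trans ?_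
  rw [div_le_div_iff₀ (by positivity) (by norm_num)]
  have a : 0 ≤ r ^ 8 := by positivity
  have : 1 - r ^ 8 ≤ (1 + r ^ 8) ^ 2 := by nlinarith
  have : (r ^ 3 + 6 * r ^ 4 + r ^ 5) * (1 - r ^ 8) ≤
    (r ^ 3 + 6 * r ^ 4 + r ^ 5) * (1 + r ^ 8) ^ 2 := by gcongr
  linarith

lemma ZR_upperC (r k : ℝ) (h0 : 0 < r) (h1 : r < 13 / 20)
    (hk : 4 * r * k ^ 2 = (1 + r) ^ 2) :
    100 * ZR r k - psi2R r ≤ phi2R r / phiR r * psiR r := by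
  have h2 := ZR_upper2 r k h0 (by linarith) hk
  have h3 := certC r h0 h1
  have hp := phiR_pos r h0.le h1.le
  rw [div_mul_eq_mul_div, le_div_iff₀ hp]
  refine le_trans ?_ h3
  gcongr

lemma ZR_nonneg (r k : ℝ) (h0 : 0 < r) (h1 : r < 1) (hk0 : 0 < k) : 0 ≤ ZR r k := by
  have b : 0 ≤ 1 - r ^ 8 := by
    have : r ^ 8 ≤ 1 := pow_le_one₀ h0.le (by linarith)
    linarith
  unfold ZR; positivity

lemma VR_nonneg (r : ℝ) (h0 : 0 < r) (h1 : r < 1) : 0 ≤ VR r := by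
  have b : 0 ≤ 1 - r ^ 8 := by
    have : r ^ 8 ≤ 1 := pow_le_one₀ h0.le (by linarith)
    linarith
  have c : 0 ≤ 1 - r ^ 2 := by nlinarith
  unfold VR; positivity

lemma VR_le (r : ℝ) (h0 : 0 < r) (h1 : r < 1) : VR r ≤ 25 * r := by
  have b : 0 ≤ 1 - r ^ 8 := by
    have : r ^ 8 ≤ 1 := pow_le_one₀ h0.le (by linarith)
    linarith
  have c : 0 ≤ 1 - r ^ 2 := by nlinarith
  have a : 0 ≤ r ^ 8 := by positivity
  have a2 : 0 ≤ r ^ 2 := by positivity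
  have h2 : r / (64 * (1 + r) ^ 2) ≤ r := by
    apply div_le_self h0.le; nlinarith
  have h3 : 24 * r ^ 7 * (1 - r ^ 2) * (1 - r ^ 8) / (1 + r ^ 8) ^ 3 ≤ 24 * r := by
    have d : 1 ≤ (1 + r ^ 8) ^ 3 := one_le_pow₀ (by linarith)
    refine (div_le_self (by positivity) d).trans ?_
    have e : r ^ 7 ≤ r := by
      calc r ^ 7 ≤ r ^ 1 := pow_le_pow_of_le_one h0.le h1.le (by norm_num)
        _ = r := pow_one r
    calc _ ≤ 24 * r * 1 * 1 := by gcongr <;> linarith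
      _ = _ := by ring
  unfold VR; linarith

lemma ZR_le (r k : ℝ) (h0 : 0 < r) (h1 : r < 1)
    (hk : 4 * r * k ^ 2 = (1 + r) ^ 2) : ZR r k ≤ 2 * r := by
  have := ZR_upper2 r k h0 h1 hk
  have e : ∀ n : ℕ, 1 ≤ n → r ^ n ≤ r := fun n hn => by
    calc r ^ n ≤ r ^ 1 := pow_le_pow_of_le_one h0.le h1.le hn
        _ = r := pow_one r
  have := e 3 (by norm_num)
  have := e 4 (by norm_num)
  have := e 5 (by norm_num)
  linarith

/-! ### The functions of `x` -/

noncomputable def dd : ℝ := 4 * Real.sqrt 2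

noncomputable def rr (x : ℝ) : ℝ := Real.exp (-x / dd)

noncomputable def kk (x : ℝ) : ℝ := Real.cosh (x / (8 * Real.sqrt 2))

noncomputable def psi1R (r : ℝ) : ℝ :=
  -(-44 * r + 3192 * r ^ 4 - 13428 * r ^ 6 + 16168 * r ^ 8 - 6150 * r ^ 10) / dd

noncomputable def phi1R (r : ℝ) : ℝ := (3 / 4 * r + 279 / 50 * r ^ 3) / dd

lemma dd_pos : 0 < dd := by unfold dd; positivity

lemma dd_sq : dd ^ 2 = 32 := by
  unfold dd; rw [mul_pow, Real.sq_sqrt (by norm_num)]; norm_num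

lemma rr_pos (x : ℝ) : 0 < rr x := Real.exp_pos _

lemma rr_lt_one (x : ℝ) (hx : 0 < x) : rr x < 1 := by
  unfold rr
  rw [Real.exp_lt_one_iff]
  exact div_neg_of_neg_of_pos (by linarith) dd_pos

lemma rr_zero : rr 0 = 1 := by simp [rr]

lemma rr_hasDerivAt (x : ℝ) : HasDerivAt rr (-(rr x) / dd) x := by
  have h : HasDerivAt (fun x : ℝ => -x / dd) (-1 / dd) x := (hasDerivAt_id x).neg.div_const dd
  have h2 : HasDerivAt rr (Real.exp (-x / dd) * (-1 / dd)) x := h.exp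
  refine h2.congr_deriv ?_
  change _ = -(Real.exp (-x / dd)) / dd
  ring

lemma psi_hasDerivAt (x : ℝ) : HasDerivAt (fun x => psiR (rr x)) (psi1R (rr x)) x := by
  have h := rr_hasDerivAt x
  have := (((((h.const_mul 44).const_sub 78).add ((h.pow 4).const_mul 798)).sub
    ((h.pow 6).const_mul 2238)).add ((h.pow 8).const_mul 2021)).sub ((h.pow 10).const_mul 615)
  refine this.congr_deriv ?_
  unfold psi1R
  push_cast
  ring

lemma psi1_hasDerivAt (x : ℝ) : HasDerivAt (fun x => psi1R (rr x)) (psi2R (rr x)) x := by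
  have h := rr_hasDerivAt x
  have := ((((((h.const_mul (-44)).add ((h.pow 4).const_mul 3192)).sub
    ((h.pow 6).const_mul 13428)).add ((h.pow 8).const_mul 16168)).sub
      ((h.pow 10).const_mul 6150)).neg).div_const dd
  refine this.congr_deriv ?_
  unfold psi2R
  have hd := dd_pos.ne'
  rw [← dd_sq]
  push_cast
  field_simp
  ring

lemma phi_hasDerivAt (x : ℝ) : HasDerivAt (fun x => phiR (rr x)) (phi1R (rr x)) x := by
  have h := rr_hasDerivAt x
  have := ((h.const_mul (3 / 4)).const_sub 1).sub ((h.pow 3).const_mul (93 / 50))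
  refine this.congr_deriv ?_
  unfold phi1R
  push_cast
  ring

lemma phi1_hasDerivAt (x : ℝ) : HasDerivAt (fun x => phi1R (rr x)) (-phi2R (rr x)) x := by
  have h := rr_hasDerivAt x
  have := ((h.const_mul (3 / 4)).add ((h.pow 3).const_mul (279 / 50))).div_const dd
  refine this.congr_deriv ?_
  unfold phi2R
  have hd := dd_pos.ne'
  rw [← dd_sq]
  push_cast
  field_simp
  ring

lemma kk_pos (x : ℝ) : 0 < kk x := Real.cosh_pos _

lemma rr_eq (x : ℝ) : rr x = (Real.exp (x / (8 * Real.sqrt 2)))⁻¹ ^ 2 := by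
  unfold rr dd
  rw [← Real.exp_neg, ← Real.exp_nat_mul]
  congr 1
  push_cast
  field_simp
  ring

lemma kk_rr (x : ℝ) : 4 * rr x * kk x ^ 2 = (1 + rr x) ^ 2 := by
  rw [rr_eq]
  unfold kk
  rw [Real.cosh_eq, Real.exp_neg]
  have := (Real.exp_pos (x / (8 * Real.sqrt 2))).ne'
  field_simp
  ring

lemma cosh_big (x : ℝ) : Real.cosh (x / Real.sqrt 2) = (1 + rr x ^ 8) / (2 * rr x ^ 4) := by
  have e : x / Real.sqrt 2 = (8 : ℕ) * (x / (8 * Real.sqrt 2)) := by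
    push_cast; field_simp
  rw [Real.cosh_eq, Real.exp_neg, rr_eq, e, Real.exp_nat_mul]
  have := (Real.exp_pos (x / (8 * Real.sqrt 2))).ne'
  field_simp

lemma sinh_big (x : ℝ) : Real.sinh (x / Real.sqrt 2) = (1 - rr x ^ 8) / (2 * rr x ^ 4) := by
  have e : x / Real.sqrt 2 = (8 : ℕ) * (x / (8 * Real.sqrt 2)) := by
    push_cast; field_simp
  rw [Real.sinh_eq, Real.exp_neg, rr_eq, e, Real.exp_nat_mul]
  have := (Real.exp_pos (x / (8 * Real.sqrt 2))).ne'
  field_simp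

lemma sech_big (x : ℝ) : sech (x / Real.sqrt 2) = 2 * rr x ^ 4 / (1 + rr x ^ 8) := by
  unfold sech
  rw [cosh_big, one_div_div]

lemma tanh_big (x : ℝ) : Real.tanh (x / Real.sqrt 2) = (1 - rr x ^ 8) / (1 + rr x ^ 8) := by
  rw [Real.tanh_eq_sinh_div_cosh, cosh_big, sinh_big]
  have := rr_pos x
  field_simp

lemma sc_small (x : ℝ) : Real.sinh (x / (8 * Real.sqrt 2)) * Real.cosh (x / (8 * Real.sqrt 2)) =
    (1 - rr x ^ 2) / (4 * rr x) := by
  rw [Real.sinh_eq, Real.cosh_eq, Real.exp_neg, rr_eq]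
  have := (Real.exp_pos (x / (8 * Real.sqrt 2))).ne'
  field_simp
  ring

lemma Vpot_eq (x : ℝ) : Vpot x = VR (rr x) := by
  have hr := rr_pos x
  have hk := kk_rr x
  have hk0 := kk_pos x
  unfold Vpot
  have h1 : sech (x / (8 * Real.sqrt 2)) ^ 2 = 4 * rr x / (1 + rr x) ^ 2 := by
    rw [← hk]
    unfold sech kk
    have := (Real.cosh_pos (x / (8 * Real.sqrt 2))).ne'
    field_simp
  have h2 : Real.tanh (x / (8 * Real.sqrt 2)) * Real.cosh (x / (8 * Real.sqrt 2)) ^ 2 =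
      (1 - rr x ^ 2) / (4 * rr x) := by
    rw [← sc_small, Real.tanh_eq_sinh_div_cosh]
    have := (Real.cosh_pos (x / (8 * Real.sqrt 2))).ne'
    field_simp
  rw [h1, mul_assoc 24, h2, tanh_big, sech_big]
  unfold VR
  field_simp
  ring

noncomputable def KK : ℝ := (2 : ℝ) ^ (-(3 : ℝ) / 4) * Real.sqrt 3

lemma KK_pos : 0 < KK := by unfold KK; positivity

lemma Z1_eq (x : ℝ) : Z1 x = KK * ZR (rr x) (kk x) := by
  unfold Z1
  rw [tanh_big, sech_big]
  unfold KK ZR kk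
  have := rr_pos x
  field_simp

lemma Z1_neg (x : ℝ) : Z1 (-x) = -Z1 x := by
  unfold Z1 sech
  simp only [neg_div, Real.tanh_neg, Real.cosh_neg]
  ring

lemma Vpot_neg (x : ℝ) : Vpot (-x) = Vpot x := by
  unfold Vpot sech
  simp only [neg_div, Real.tanh_neg, Real.cosh_neg]
  ring

lemma measurable_rr : Measurable rr := by unfold rr; fun_prop
lemma measurable_kk : Measurable kk := by
  unfold kk; exact Real.continuous_cosh.measurable.comp (by fun_prop)
lemma measurable_VR : Measurable VR := by unfold VR; fun_prop
lemma measurable_ZR : Measurable (fun x => ZR (rr x) (kk x)) := by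
  have := measurable_rr
  have := measurable_kk
  unfold ZR; fun_prop

lemma integrable_rr : IntegrableOn rr (Set.Ioi 0) := by
  have := integrableOn_exp_mul_Ioi (a := -1 / dd) (div_neg_of_neg_of_pos (by norm_num) dd_pos) 0
  refine this.congr_fun (fun x _ => ?_) measurableSet_Ioi
  unfold rr; ring_nf

lemma rr_tendsto : Filter.Tendsto rr Filter.atTop (nhds 0) := by
  unfold rr
  refine Real.tendsto_exp_atBot.comp ?_
  exact Filter.Tendsto.atBot_div_const dd_pos Filter.tendsto_neg_atTop_atBot

/-- The pointwise inequality behind the argument. -/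
lemma pointwise (w w' ps ps' ps2 Z V p P s : ℝ) (hps : 0 < ps) (hZ : 0 ≤ Z)
    (h1 : V * ps ≤ Z - ps2) (h2 : Z - ps2 ≤ P * ps) :
    (-P - p ^ 2) * (w + s * ps) ^ 2 + p * (2 * (w + s * ps) * (w' + s * ps'))
      - 2 * s * ((w' + s * ps') * ps' + (w + s * ps) * ps2) + s ^ 2 * (ps' * ps' + ps * ps2)
      ≤ w' ^ 2 - V * w ^ 2 - 2 * s * Z * w := by
  set N := Z - ps2 with hN
  obtain ⟨n, hn⟩ : ∃ n, N = n * ps := ⟨N / ps, by field_simp⟩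
  have hnV : V ≤ n := by
    rw [hn] at h1; exact le_of_mul_le_mul_right h1 hps
  have hnP : n ≤ P := by
    rw [hn] at h2; exact le_of_mul_le_mul_right h2 hps
  have hps2 : ps2 = Z - n * ps := by linarith
  have a1 := sq_nonneg (w' + s * ps' - p * (w + s * ps))
  have a2 : 0 ≤ (P - n) * (w + s * ps) ^ 2 := mul_nonneg (by linarith) (sq_nonneg _)
  have a3 : 0 ≤ (n - V) * w ^ 2 := mul_nonneg (by linarith) (sq_nonneg _)
  have a4 : 0 ≤ s ^ 2 * ps * Z := by positivity
  rw [hps2]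
  nlinarith

/-! ### The integral argument -/

noncomputable def FF (w : ℝ → ℝ) (s x : ℝ) : ℝ :=
  (deriv w x) ^ 2 - 101 / 100 * VR (rr x) * (w x) ^ 2
    - 2 * s * (100 * ZR (rr x) (kk x)) * w x

noncomputable def GG (w p : ℝ → ℝ) (s x : ℝ) : ℝ :=
  p x * (w x + s * psiR (rr x)) ^ 2 - 2 * s * ((w x + s * psiR (rr x)) * psi1R (rr x))
    + s ^ 2 * (psiR (rr x) * psi1R (rr x))

lemma seg (w p P : ℝ → ℝ) (s a b : ℝ) (ha : 0 ≤ a) (hab : a ≤ b) (hw : Differentiable ℝ w)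
    (hpc : ContinuousOn p (Set.Icc a b))
    (hp : ∀ x ∈ Set.Ioo a b, HasDerivAt p (-P x - (p x) ^ 2) x)
    (hP : ∀ x ∈ Set.Ioo a b, 100 * ZR (rr x) (kk x) - psi2R (rr x) ≤ P x * psiR (rr x))
    (hF : IntegrableOn (FF w s) (Set.Icc a b)) :
    GG w p s b - GG w p s a ≤ ∫ x in a..b, FF w s x := by
  have hps : Continuous (fun x => psiR (rr x)) :=
    continuous_iff_continuousAt.2 fun x => (psi_hasDerivAt x).continuousAt
  have hps1 : Continuous (fun x => psi1R (rr x)) :=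
    continuous_iff_continuousAt.2 fun x => (psi1_hasDerivAt x).continuousAt
  have hwc := hw.continuous
  have hv : ∀ x, HasDerivAt (fun x => w x + s * psiR (rr x))
      (deriv w x + s * psi1R (rr x)) x := fun x =>
    (hw x).hasDerivAt.add ((psi_hasDerivAt x).const_mul s)
  refine intervalIntegral.sub_le_integral_of_hasDeriv_right_of_le (g' := fun x =>
    (-P x - p x ^ 2) * (w x + s * psiR (rr x)) ^ 2
      + p x * (2 * (w x + s * psiR (rr x)) * (deriv w x + s * psi1R (rr x)))
      - 2 * s * ((deriv w x + s * psi1R (rr x)) * psi1R (rr x)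
        + (w x + s * psiR (rr x)) * psi2R (rr x))
      + s ^ 2 * (psi1R (rr x) * psi1R (rr x) + psiR (rr x) * psi2R (rr x)))
    hab ?_ ?_ hF ?_
  · have h1 : ContinuousOn (fun x => p x * (w x + s * psiR (rr x)) ^ 2) (Set.Icc a b) :=
      hpc.mul (by fun_prop)
    have h2 : Continuous (fun x => 2 * s * ((w x + s * psiR (rr x)) * psi1R (rr x))) := by
      fun_prop
    have h3 : Continuous (fun x => s ^ 2 * (psiR (rr x) * psi1R (rr x))) := by fun_prop
    exact (h1.sub h2.continuousOn).add h3.continuousOn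
  · intro x hx
    have := (((hp x hx).mul ((hv x).pow 2)).sub
      (((hv x).mul (psi1_hasDerivAt x)).const_mul (2 * s))).add
      (((psi_hasDerivAt x).mul (psi1_hasDerivAt x)).const_mul (s ^ 2))
    refine (HasDerivAt.congr_deriv this ?_).hasDerivWithinAt
    simp
  · intro x hx
    have hx0 : 0 < x := lt_of_le_of_lt ha hx.1
    have r0 := rr_pos x
    have r1 := rr_lt_one x hx0
    exact pointwise (w x) (deriv w x) (psiR (rr x)) (psi1R (rr x)) (psi2R (rr x))
      (100 * ZR (rr x) (kk x)) (101 / 100 * VR (rr x)) (p x) (P x) s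
      (psiR_pos _ r0.le r1) (by have := ZR_nonneg _ (kk x) r0 r1 (kk_pos x); positivity)
      (ZR_lower _ _ r0 r1 (kk_rr x) (kk_pos x)) (hP x hx)

noncomputable def RR : ℝ := dd * Real.log (20 / 13)

lemma RR_pos : 0 < RR := mul_pos dd_pos (Real.log_pos (by norm_num))

lemma rr_RR : rr RR = 13 / 20 := by
  unfold rr RR
  rw [neg_div, mul_div_cancel_left₀ _ dd_pos.ne', Real.exp_neg, Real.exp_log (by norm_num)]
  norm_num

lemma rr_anti {x y : ℝ} (h : x < y) : rr y < rr x := by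
  unfold rr
  rw [Real.exp_lt_exp]
  exact div_lt_div_of_pos_right (by linarith) dd_pos

lemma log_bd : Real.log (20 / 13) < 436 / 1000 := by
  rw [Real.log_lt_iff_lt_exp (by norm_num)]
  refine lt_of_lt_of_le ?_ (Real.sum_le_exp_of_nonneg (by norm_num) 6)
  simp_rw [Finset.sum_range_succ, Nat.factorial_succ]
  norm_num

noncomputable def cc : ℝ := 9 * Real.sqrt 2 / 10

lemma cc_pos : 0 < cc := by unfold cc; positivity

lemma cc_sq : cc ^ 2 = 81 / 50 := by
  unfold cc; rw [div_pow, mul_pow, Real.sq_sqrt (by norm_num)]; norm_num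

lemma cc_RR : cc * (RR / 2) < Real.pi / 2 := by
  have h : cc * (RR / 2) = 18 / 5 * Real.log (20 / 13) := by
    unfold cc RR dd
    have := Real.mul_self_sqrt (show (0 : ℝ) ≤ 2 by norm_num)
    linear_combination (9 / 5) * Real.log (20 / 13) * this
  have := log_bd
  have := Real.pi_gt_d2
  rw [h]; linarith

noncomputable def pL (x : ℝ) : ℝ := -cc * Real.tan (cc * (x - RR / 2))

noncomputable def pR (x : ℝ) : ℝ := phi1R (rr x) / phiR (rr x)

lemma cos_ne (x : ℝ) (hx : x ∈ Set.Icc 0 RR) : Real.cos (cc * (x - RR / 2)) ≠ 0 := by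
  have h := cc_RR
  have hc := cc_pos
  refine (Real.cos_pos_of_mem_Ioo ⟨?_, ?_⟩).ne'
  · have : cc * (-(RR / 2)) ≤ cc * (x - RR / 2) := by gcongr; linarith [hx.1]
    linarith
  · have : cc * (x - RR / 2) ≤ cc * (RR / 2) := by gcongr; linarith [hx.2]
    linarith

lemma pL_hasDerivAt (x : ℝ) (hx : x ∈ Set.Icc 0 RR) :
    HasDerivAt pL (-(81 / 50) - (pL x) ^ 2) x := by
  have hc := cos_ne x hx
  have h1 : HasDerivAt (fun x => cc * (x - RR / 2)) (cc * 1) x :=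
    ((hasDerivAt_id x).sub_const _).const_mul cc
  have h2 := ((Real.hasDerivAt_tan hc).comp x h1).const_mul (-cc)
  refine h2.congr_deriv ?_
  unfold pL
  rw [← cc_sq, Real.tan_eq_sin_div_cos]
  have h3 := Real.sin_sq_add_cos_sq (cc * (x - RR / 2))
  generalize Real.cos (cc * (x - RR / 2)) = C at *
  generalize Real.sin (cc * (x - RR / 2)) = S at *
  field_simp
  linear_combination cc ^ 2 * h3

lemma pR_hasDerivAt (x : ℝ) (hx : RR ≤ x) :
    HasDerivAt pR (-(phi2R (rr x) / phiR (rr x)) - (pR x) ^ 2) x := by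
  have hr : rr x ≤ 13 / 20 := by
    rcases hx.eq_or_lt with h | h
    · rw [← h, rr_RR]
    · rw [← rr_RR]; exact (rr_anti h).le
  have hp := phiR_pos _ (rr_pos x).le hr
  have := (phi1_hasDerivAt x).div (phi_hasDerivAt x) hp.ne'
  refine this.congr_deriv ?_
  unfold pR
  field_simp

lemma pR_nonneg (x : ℝ) (hx : RR ≤ x) : 0 ≤ pR x := by
  have hr : rr x ≤ 13 / 20 := by
    rcases hx.eq_or_lt with h | h
    · rw [← h, rr_RR]
    · rw [← rr_RR]; exact (rr_anti h).le
  have hp := phiR_pos _ (rr_pos x).le hr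
  have := rr_pos x
  have := dd_pos
  unfold pR phi1R
  positivity

lemma half_line_T (w : ℝ → ℝ) (hw : Differentiable ℝ w) (h0 : w 0 = 0) (s : ℝ)
    (hs : w RR + s * psiR (rr RR) = 0) (hF : IntegrableOn (FF w s) (Set.Ici 0)) (T : ℝ)
    (hT : RR ≤ T) :
    psi1R (rr T) * (-2 * s * (w T + s * psiR (rr T)) + s ^ 2 * psiR (rr T)) ≤
      ∫ x in (0 : ℝ)..T, FF w s x := by
  have hR := RR_pos
  have h1 := seg w pL (fun _ => 81 / 50) s 0 RR le_rfl hR.le hw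
    (fun x hx => (pL_hasDerivAt x hx).continuousAt.continuousWithinAt)
    (fun x hx => pL_hasDerivAt x ⟨hx.1.le, hx.2.le⟩)
    (fun x hx => ZR_upperB _ _ (by rw [← rr_RR]; exact (rr_anti hx.2).le) (rr_lt_one x hx.1)
      (kk_rr x)) (hF.mono_set Set.Icc_subset_Ici_self)
  have h2 := seg w pR (fun x => phi2R (rr x) / phiR (rr x)) s RR T hR.le hT hw
    (fun x hx => (pR_hasDerivAt x hx.1).continuousAt.continuousWithinAt)
    (fun x hx => pR_hasDerivAt x hx.1.le)
    (fun x hx => ZR_upperC _ _ (rr_pos x) (by rw [← rr_RR]; exact rr_anti hx.1)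
      (kk_rr x)) (hF.mono_set (fun x hx => hR.le.trans hx.1))
  have i1 : IntervalIntegrable (FF w s) volume 0 RR :=
    (intervalIntegrable_iff_integrableOn_Icc_of_le hR.le).2 (hF.mono_set Set.Icc_subset_Ici_self)
  have i2 : IntervalIntegrable (FF w s) volume RR T :=
    (intervalIntegrable_iff_integrableOn_Icc_of_le hT).2
      (hF.mono_set (fun x hx => hR.le.trans hx.1))
  rw [← intervalIntegral.integral_add_adjacent_intervals i1 i2]
  have e0 : GG w pL s 0 = 0 := by
    have : psiR 1 = 0 := by unfold psiR; norm_num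
    simp [GG, rr_zero, h0, this]
  have e1 : GG w pL s RR = GG w pR s RR := by simp [GG, hs]
  have e2 : psi1R (rr T) * (-2 * s * (w T + s * psiR (rr T)) + s ^ 2 * psiR (rr T)) ≤
      GG w pR s T := by
    have := mul_nonneg (pR_nonneg T hT) (sq_nonneg (w T + s * psiR (rr T)))
    unfold GG
    linarith
  linarith

lemma half_line (w : ℝ → ℝ) (hw : Differentiable ℝ w) (h0 : w 0 = 0) (M : ℝ)
    (hM : ∀ x, |w x| ≤ M) (s : ℝ)
    (hs : w RR + s * psiR (rr RR) = 0) (hF : IntegrableOn (FF w s) (Set.Ioi 0)) :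
    0 ≤ ∫ x in Set.Ioi (0 : ℝ), FF w s x := by
  have hlim := intervalIntegral_tendsto_integral_Ioi 0 hF Filter.tendsto_id
  have hps : Filter.Tendsto (fun x => psiR (rr x)) Filter.atTop (nhds (psiR 0)) :=
    ((show Continuous psiR by unfold psiR; fun_prop).tendsto 0).comp rr_tendsto
  have hps1 : Filter.Tendsto (fun x => psi1R (rr x)) Filter.atTop (nhds 0) := by
    have := ((show Continuous psi1R by unfold psi1R; fun_prop).tendsto 0).comp rr_tendsto
    have e : psi1R 0 = 0 := by simp [psi1R]
    rw [e] at this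
    exact this
  have t1 : Filter.Tendsto (fun T => psi1R (rr T) * w T) Filter.atTop (nhds 0) := by
    refine squeeze_zero_norm (a := fun T => |psi1R (rr T)| * M) (fun T => ?_) ?_
    · rw [Real.norm_eq_abs, abs_mul]
      exact mul_le_mul_of_nonneg_left (hM T) (abs_nonneg _)
    · simpa using (hps1.abs).mul_const M
  have t2 := hps1.mul hps
  have hlow : Filter.Tendsto (fun T => psi1R (rr T) *
      (-2 * s * (w T + s * psiR (rr T)) + s ^ 2 * psiR (rr T))) Filter.atTop (nhds 0) := by
    have := (t1.const_mul (-2 * s)).add (t2.const_mul (-2 * s * s + s ^ 2))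
    simp only [zero_mul, mul_zero, add_zero] at this
    refine this.congr (fun T => ?_)
    ring
  refine le_of_tendsto_of_tendsto hlow hlim ?_
  filter_upwards [Filter.eventually_ge_atTop RR] with T hT
  exact half_line_T w hw h0 s hs ((integrableOn_Ici_iff_integrableOn_Ioi).2 hF) T hT

lemma even_integral (f : ℝ → ℝ) (hf : ∀ x, f (-x) = f x) :
    ∫ x, f x = 2 * ∫ x in Set.Ioi (0 : ℝ), f x := by
  rw [← integral_comp_abs]
  congr 1
  ext x
  rcases abs_choice x with h | h <;> rw [h]
  rw [hf]

theorem coercivity_Bsharp_bounded_functions :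
    ∃ κ > 0, ∀ w : ℝ → ℝ,
      (∀ x : ℝ, w (-x) = -w x) →
      (∃ M : ℝ, ∀ x : ℝ, |w x| ≤ M) →
      Differentiable ℝ w →
      Integrable (fun x => (deriv w x) ^ 2) →
      (∫ x : ℝ, w x * Z1 x) = 0 →
      (∫ x : ℝ, ((deriv w x) ^ 2 - Vpot x * (w x) ^ 2))
        ≥ κ * (∫ x : ℝ, (deriv w x) ^ 2) := by
  refine ⟨1 / 101, by norm_num, ?_⟩
  rintro w hodd ⟨M, hM⟩ hw hint hZ
  have h0 : w 0 = 0 := by have := hodd 0; rw [neg_zero] at this; linarith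
  have hder : ∀ x, deriv w (-x) = deriv w x := by
    intro x
    have h1 : (fun y => w (-y)) = fun y => -w y := funext hodd
    have h2 := congrArg (fun f => deriv f x) h1
    simp only [deriv_comp_neg, deriv.fun_neg] at h2
    linarith
  have hM0 : 0 ≤ M := (abs_nonneg _).trans (hM 0)
  have hwm : Measurable w := hw.continuous.measurable
  have iD : IntegrableOn (fun x => (deriv w x) ^ 2) (Set.Ioi 0) := hint.integrableOn
  have iV : IntegrableOn (fun x => VR (rr x) * (w x) ^ 2) (Set.Ioi 0) := by
    refine Integrable.mono' (integrable_rr.const_mul (25 * M ^ 2)) ?_ ?_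
    · exact ((measurable_VR.comp measurable_rr).mul (hwm.pow_const 2)).aestronglyMeasurable
    · refine (ae_restrict_iff' measurableSet_Ioi).2 (Filter.Eventually.of_forall fun x hx => ?_)
      have r0 := rr_pos x
      have r1 := rr_lt_one x hx
      have v0 := VR_nonneg _ r0 r1
      have v1 := VR_le _ r0 r1
      have w1 : (w x) ^ 2 ≤ M ^ 2 := sq_le_sq' (abs_le.1 (hM x)).1 (abs_le.1 (hM x)).2
      rw [Real.norm_eq_abs, abs_of_nonneg (by positivity)]
      calc _ ≤ (25 * rr x) * M ^ 2 := by gcongr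
        _ = _ := by ring
  have iZ : IntegrableOn (fun x => w x * ZR (rr x) (kk x)) (Set.Ioi 0) := by
    refine Integrable.mono' (integrable_rr.const_mul (2 * M)) ?_ ?_
    · exact (hwm.mul measurable_ZR).aestronglyMeasurable
    · refine (ae_restrict_iff' measurableSet_Ioi).2 (Filter.Eventually.of_forall fun x hx => ?_)
      have r0 := rr_pos x
      have r1 := rr_lt_one x hx
      have v0 := ZR_nonneg _ (kk x) r0 r1 (kk_pos x)
      have v1 := ZR_le _ (kk x) r0 r1 (kk_rr x)
      rw [Real.norm_eq_abs, abs_mul, abs_of_nonneg v0]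
      calc _ ≤ M * (2 * rr x) := by gcongr; exact hM x
        _ = _ := by ring
  have zZ : ∫ x in Set.Ioi (0 : ℝ), w x * ZR (rr x) (kk x) = 0 := by
    rw [even_integral (fun x => w x * Z1 x) (fun x => by simp only [hodd, Z1_neg]; ring)] at hZ
    have e : ∫ x in Set.Ioi (0 : ℝ), w x * Z1 x =
        KK * ∫ x in Set.Ioi (0 : ℝ), w x * ZR (rr x) (kk x) := by
      rw [← integral_const_mul]
      congr 1
      ext x
      rw [Z1_eq]; ring
    rw [e] at hZ
    have := KK_pos.ne'
    simpa [this] using hZ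
  obtain ⟨s, hs⟩ : ∃ s, w RR + s * psiR (rr RR) = 0 := by
    have := (psiR_pos (rr RR) (rr_pos _).le (rr_lt_one _ RR_pos)).ne'
    exact ⟨-w RR / psiR (rr RR), by field_simp; ring⟩
  have eF : FF w s = fun x => ((deriv w x) ^ 2 - 101 / 100 * (VR (rr x) * (w x) ^ 2))
      - 200 * s * (w x * ZR (rr x) (kk x)) := by
    ext x; unfold FF; ring
  have iF : IntegrableOn (FF w s) (Set.Ioi 0) := by
    rw [eF]; exact (iD.sub (iV.const_mul _)).sub (iZ.const_mul _)
  have key := half_line w hw h0 M hM s hs iF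
  have iDV : IntegrableOn (fun x => (deriv w x) ^ 2 - 101 / 100 * (VR (rr x) * (w x) ^ 2))
      (Set.Ioi 0) := iD.sub (iV.const_mul _)
  rw [eF, integral_sub iDV (iZ.const_mul _),
    integral_sub iD (iV.const_mul _), integral_const_mul, integral_const_mul, zZ] at key
  rw [even_integral (fun x => (deriv w x) ^ 2 - Vpot x * (w x) ^ 2)
    (fun x => by simp only [hder, Vpot_neg, hodd]; ring),
    even_integral (fun x => (deriv w x) ^ 2) (fun x => by simp only [hder])]
  have e : ∫ x in Set.Ioi (0 : ℝ), ((deriv w x) ^ 2 - Vpot x * (w x) ^ 2) =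
      (∫ x in Set.Ioi (0 : ℝ), (deriv w x) ^ 2) -
        ∫ x in Set.Ioi (0 : ℝ), VR (rr x) * (w x) ^ 2 := by
    rw [← integral_sub iD iV]
    simp only [Vpot_eq]
  rw [e]
  linarith
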